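/- There exists a constant K > 0 such that for every x in the closed positive Weyl chamber ā₊, 0 ≤ (ρ, x) + (x, ∇F_0(x))/F_0(x) ≤ K. (The middle quantity is the Euler operator E f(x) = (x, ∇f(x)) applied to f = log(e^{(ρ,·)} F_0).) -/

import Mathlib

open scoped BigOperators RealInnerProductSpace Classical

noncomputable section

variable {E : Type*} [NormedAddCommGroup E] [InnerProductSpace ℝ E] [FiniteDimensional ℝ E]

/-- The coroot `α∨ = 2α/|α|²`. -/
def coroot (α : E) : E := (2 / ⟪α, α⟫) • α

/-- The orthogonal reflection `r_α x = x - (α∨, x) α`. -/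
def rRefl (α : E) (x : E) : E := x - ⟪coroot α, x⟫ • α

/-- Data of an integral root system with positive subsystem and
a Weyl-invariant positive multiplicity function. -/
structure HOData (E : Type*) [NormedAddCommGroup E] [InnerProductSpace ℝ E] : Type _ where
  R : Finset E
  Rpos : Finset E
  k : E → ℝ
  k_pos : ∀ α ∈ R, 0 < k α
  root_ne_zero : ∀ α ∈ R, α ≠ 0
  pos_subset : Rpos ⊆ R
  pos_char : ∃ u : E, ∀ α ∈ R, (α ∈ Rpos ↔ 0 < ⟪α, u⟫)
  pos_or_neg : ∀ α ∈ R, α ∈ Rpos ∨ -α ∈ Rpos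
  neg_mem : ∀ α ∈ R, -α ∈ R
  integral : ∀ α ∈ R, ∀ β ∈ R, ∃ n : ℤ, ⟪coroot α, β⟫ = (n : ℝ)
  refl_mem : ∀ α ∈ R, ∀ β ∈ R, rRefl α β ∈ R
  k_inv : ∀ α ∈ R, ∀ β ∈ R, k (rRefl α β) = k β

/-- The Weyl group: the subgroup of linear isometries generated by the root reflections. -/
def weylGroup (D : HOData E) : Subgroup (E ≃ₗᵢ[ℝ] E) :=
  Subgroup.closure {w : E ≃ₗᵢ[ℝ] E | ∃ α ∈ D.R, ∀ x, w x = rRefl α x}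

/-- `ρ = (1/2) Σ_{α ∈ R⁺} k_α α`. -/
def rhoHO (D : HOData E) : E := (2:ℝ)⁻¹ • ∑ α ∈ D.Rpos, D.k α • α

/-- Regular points. -/
def HORegular (D : HOData E) (x : E) : Prop := ∀ α ∈ D.R, ⟪α, x⟫ ≠ 0

/-- The (open) positive Weyl chamber. -/
def posChamber (D : HOData E) : Set E := {x | ∀ α ∈ D.Rpos, 0 < ⟪α, x⟫}

/-- The positive indivisible roots `R₀⁺`. -/
def Rpos0 (D : HOData E) : Finset E := D.Rpos.filter (fun α => (2:ℝ)⁻¹ • α ∉ D.R)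

/-- The Opdam function `G_λ` for a real parameter `λ`: an analytic function,
normalized at `0`, satisfying the Cherednik differential-difference system. -/
def IsOpdamR (D : HOData E) (lam : E) (G : E → ℝ) : Prop :=
  AnalyticOnNhd ℝ G Set.univ ∧ G 0 = 1 ∧
  ∀ ξ x, HORegular D x →
    fderiv ℝ G x ξ =
      (∑ α ∈ D.Rpos, D.k α * ⟪α, ξ⟫ / (1 - Real.exp (-⟪α, x⟫)) * (G (rRefl α x) - G x))
      + ⟪rhoHO D + lam, ξ⟫ * G x

/-- The Opdam function `G_λ` for a complex parameter `λ = l1 + i l2 ∈ h`. -/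
def IsOpdamC (D : HOData E) (l1 l2 : E) (G : E → ℂ) : Prop :=
  AnalyticOnNhd ℝ G Set.univ ∧ G 0 = 1 ∧
  ∀ ξ x, HORegular D x →
    fderiv ℝ G x ξ =
      (∑ α ∈ D.Rpos, ((D.k α * ⟪α, ξ⟫ / (1 - Real.exp (-⟪α, x⟫)) : ℝ) : ℂ)
          * (G (rRefl α x) - G x))
      + (((⟪rhoHO D + l1, ξ⟫ : ℝ) : ℂ) + Complex.I * ((⟪l2, ξ⟫ : ℝ) : ℂ)) * G x

/-- The symmetrization `F(x) = |W|⁻¹ Σ_{w ∈ W} G(w x)` (real valued case). -/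
def Fsym (D : HOData E) [Fintype (weylGroup D)] (G : E → ℝ) (x : E) : ℝ :=
  (Fintype.card (weylGroup D) : ℝ)⁻¹ * ∑ w : weylGroup D, G (w.1 x)

/-- The symmetrization `F(x) = |W|⁻¹ Σ_{w ∈ W} G(w x)` (complex valued case). -/
def FsymC (D : HOData E) [Fintype (weylGroup D)] (G : E → ℂ) (x : E) : ℂ :=
  (Fintype.card (weylGroup D) : ℂ)⁻¹ * ∑ w : weylGroup D, G (w.1 x)

/-- `max_{w ∈ W} (w λ, x)`. -/
def maxW (D : HOData E) [Fintype (weylGroup D)] (lam x : E) : ℝ :=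
  ⨆ w : weylGroup D, ⟪w.1 lam, x⟫

set_option linter.unusedSectionVars false

/-! ### Reflections and the Weyl group -/

lemma rRefl_add (α x y : E) : rRefl α (x + y) = rRefl α x + rRefl α y := by
  simp only [rRefl, inner_add_right, add_smul]; abel

lemma rRefl_smul (α : E) (c : ℝ) (x : E) : rRefl α (c • x) = c • rRefl α x := by
  simp only [rRefl, inner_smul_right, smul_sub, mul_smul]

lemma inner_coroot (α x : E) : ⟪coroot α, x⟫ = 2 / ⟪α, α⟫ * ⟪α, x⟫ := by
  simp [coroot, inner_smul_left]

lemma inner_coroot_self {α : E} (hα : α ≠ 0) : ⟪coroot α, α⟫ = 2 := by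
  rw [inner_coroot]
  have : ⟪α, α⟫ ≠ 0 := by simpa using hα
  field_simp

lemma rRefl_self {α : E} (hα : α ≠ 0) : rRefl α α = -α := by
  rw [rRefl, inner_coroot_self hα, two_smul]; abel

lemma inner_rRefl_left (α x y : E) :
    ⟪rRefl α x, y⟫ = ⟪x, y⟫ - ⟪coroot α, x⟫ * ⟪α, y⟫ := by
  simp [rRefl, inner_sub_left, inner_smul_left]

lemma inner_rRefl_rRefl (α x y : E) : ⟪rRefl α x, rRefl α y⟫ = ⟪x, y⟫ := by
  rcases eq_or_ne α 0 with rfl | hα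
  · simp [rRefl]
  have h : ⟪α, α⟫ ≠ 0 := by simpa using hα
  simp only [rRefl, inner_sub_left, inner_sub_right, inner_smul_left, inner_smul_right,
    inner_coroot, real_inner_comm α x]
  simp only [conj_trivial]
  field_simp
  ring

lemma rRefl_rRefl (α x : E) : rRefl α (rRefl α x) = x := by
  rcases eq_or_ne α 0 with rfl | hα
  · simp [rRefl]
  conv_lhs => rw [rRefl]
  rw [rRefl, inner_sub_right, inner_smul_right, inner_coroot_self hα, sub_sub, ← add_smul]
  simp [mul_two]

/-- A linear isometry conjugates a reflection to the reflection in the image root. -/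
lemma rRefl_map (w : E ≃ₗᵢ[ℝ] E) (α x : E) : rRefl (w α) (w x) = w (rRefl α x) := by
  simp [rRefl, inner_coroot, w.inner_map_map]

lemma rRefl_neg (α x : E) : rRefl (-α) x = rRefl α x := by
  simp [rRefl, inner_coroot]

/-- The reflection `rRefl α` as a linear isometry equivalence. -/
def rReflIso (α : E) : E ≃ₗᵢ[ℝ] E where
  toFun := rRefl α
  invFun := rRefl α
  left_inv := rRefl_rRefl α
  right_inv := rRefl_rRefl α
  map_add' := rRefl_add α
  map_smul' := rRefl_smul α
  norm_map' x := by
    change ‖rRefl α x‖ = ‖x‖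
    rw [norm_eq_sqrt_real_inner (F := E), inner_rRefl_rRefl, ← norm_eq_sqrt_real_inner]

lemma rReflIso_apply (α x : E) : rReflIso α x = rRefl α x := rfl

/-- The reflection in a root as a Weyl group element, with junk value `1` off the roots. -/
def weylRefl (D : HOData E) (α : E) : weylGroup D :=
  if h : α ∈ D.R then ⟨rReflIso α, Subgroup.subset_closure ⟨α, h, fun _ => rfl⟩⟩ else 1

lemma weylRefl_apply {D : HOData E} {α : E} (h : α ∈ D.R) (x : E) :
    (weylRefl D α).1 x = rRefl α x := by
  simp [weylRefl, h, rReflIso_apply]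

lemma weyl_mul_apply {D : HOData E} (v w : weylGroup D) (x : E) :
    (v * w).1 x = v.1 (w.1 x) := rfl

lemma weylRefl_mul_self (D : HOData E) (α : E) : weylRefl D α * weylRefl D α = 1 := by
  by_cases h : α ∈ D.R
  · apply Subtype.ext
    ext x
    simp only [weyl_mul_apply, weylRefl_apply h, rRefl_rRefl]
    rfl
  · simp [weylRefl, h]

lemma weylRefl_mul_comm {D : HOData E} {α β γ : E} (hα : α ∈ D.R) (hβ : β ∈ D.R)
    (hγ : γ ∈ D.R) (h : γ = rRefl α β ∨ γ = -rRefl α β) :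
    weylRefl D α * weylRefl D β = weylRefl D γ * weylRefl D α := by
  apply Subtype.ext
  ext x
  simp only [weyl_mul_apply, weylRefl_apply hα, weylRefl_apply hβ, weylRefl_apply hγ]
  have := rRefl_map (rReflIso α) β x
  simp only [rReflIso_apply] at this
  rcases h with rfl | rfl
  · exact this.symm
  · rw [rRefl_neg]; exact this.symm

lemma weyl_map_mem {D : HOData E} (w : weylGroup D) :
    ∀ α ∈ D.R, w.1 α ∈ D.R ∧ D.k (w.1 α) = D.k α := by
  obtain ⟨w, hw⟩ := w
  change ∀ α ∈ D.R, w α ∈ D.R ∧ D.k (w α) = D.k α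
  induction hw using Subgroup.closure_induction with
  | mem w hw =>
    obtain ⟨α, hα, h⟩ := hw
    intro β hβ
    rw [h]
    exact ⟨D.refl_mem α hα β hβ, D.k_inv α hα β hβ⟩
  | one => exact fun α hα => ⟨hα, rfl⟩
  | mul v w _ _ hv hw =>
    intro α hα
    have h := hw α hα
    have h' := hv _ h.1
    exact ⟨h'.1, h'.2.trans h.2⟩
  | inv w _ hw =>
    have hsurj : ∀ α ∈ D.R, ∃ β ∈ D.R, w β = α := by
      have := Finset.surj_on_of_inj_on_of_card_le (s := D.R) (t := D.R) (fun α _ => w α)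
        (fun α hα => (hw α hα).1) (fun a b _ _ h => w.injective h) le_rfl
      intro α hα
      obtain ⟨β, hβ, h⟩ := this α hα
      exact ⟨β, hβ, h.symm⟩
    intro α hα
    obtain ⟨β, hβ, rfl⟩ := hsurj α hα
    have : w⁻¹ (w β) = β := w.symm_apply_apply β
    rw [this]
    exact ⟨hβ, (hw β hβ).2.symm⟩

namespace HOData

lemma mem_of_pos {D : HOData E} {α : E} (h : α ∈ D.Rpos) : α ∈ D.R := D.pos_subset h

lemma neg_not_mem_pos {D : HOData E} {α : E} (h : α ∈ D.Rpos) : -α ∉ D.Rpos := by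
  obtain ⟨u, hu⟩ := D.pos_char
  have hα := mem_of_pos h
  rw [hu _ (D.neg_mem _ hα), inner_neg_left]
  have := (hu _ hα).1 h
  linarith

lemma neg_mem_pos_of_not_mem {D : HOData E} {α : E} (hR : α ∈ D.R) (h : α ∉ D.Rpos) :
    -α ∈ D.Rpos := (D.pos_or_neg α hR).resolve_left h

lemma neg_mem_pos_iff {D : HOData E} {α : E} (hR : α ∈ D.R) :
    -α ∈ D.Rpos ↔ α ∉ D.Rpos :=
  ⟨fun h h' => neg_not_mem_pos h' h, neg_mem_pos_of_not_mem hR⟩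

lemma k_neg {D : HOData E} {α : E} (hR : α ∈ D.R) : D.k (-α) = D.k α := by
  rw [← rRefl_self (D.root_ne_zero α hR), D.k_inv α hR α hR]

end HOData

lemma weyl_mem {D : HOData E} (w : weylGroup D) {α : E} (hα : α ∈ D.R) : w.1 α ∈ D.R :=
  (weyl_map_mem w α hα).1

lemma weyl_mem_pos_refl {D : HOData E} (w : weylGroup D) {α : E} (hα : α ∈ D.R) :
    (w * weylRefl D α).1 α ∈ D.Rpos ↔ w.1 α ∉ D.Rpos := by
  rw [weyl_mul_apply, weylRefl_apply hα, rRefl_self (D.root_ne_zero α hα), map_neg,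
    HOData.neg_mem_pos_iff (weyl_mem w hα)]

/-- Reindexing a sum over the positive roots by a Weyl group element. -/
lemma sum_pos_weyl {D : HOData E} (w : weylGroup D) (f : E → ℝ) :
    ∑ α ∈ D.Rpos, f α =
      ∑ β ∈ D.Rpos, if w.1 β ∈ D.Rpos then f (w.1 β) else f (-w.1 β) := by
  have hinv : ∀ x, w.1 ((w⁻¹).1 x) = x := fun x => w.1.apply_symm_apply x
  have hinv' : ∀ x, (w⁻¹).1 (w.1 x) = x := fun x => w.1.symm_apply_apply x
  have hmem : ∀ v : weylGroup D, ∀ α ∈ D.Rpos,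
      (if v.1 α ∈ D.Rpos then v.1 α else -v.1 α) ∈ D.Rpos := by
    intro v α hα
    split_ifs with h
    · exact h
    · exact HOData.neg_mem_pos_of_not_mem (weyl_mem v (HOData.mem_of_pos hα)) h
  symm
  refine Finset.sum_nbij' (fun β => if w.1 β ∈ D.Rpos then w.1 β else -w.1 β)
    (fun α => if (w⁻¹).1 α ∈ D.Rpos then (w⁻¹).1 α else -(w⁻¹).1 α)
    (hmem w) (hmem w⁻¹) ?_ ?_ ?_
  · intro β hβ
    by_cases h : w.1 β ∈ D.Rpos
    · simp only [h, if_true, hinv', hβ]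
    · simp only [h, if_false, map_neg, hinv', HOData.neg_not_mem_pos hβ, neg_neg]
  · intro β hβ
    by_cases h : (w⁻¹).1 β ∈ D.Rpos
    · simp only [h, if_true, hinv, hβ]
    · simp only [h, if_false, map_neg, hinv, HOData.neg_not_mem_pos hβ, neg_neg]
  · intro β _
    split_ifs <;> rfl

/-! ### The Cherednik system in Weyl group coordinates -/

/-- The function `s / (exp s - 1)`. -/
def bose (s : ℝ) : ℝ := s / (Real.exp s - 1)

lemma bose_nonneg {s : ℝ} (hs : 0 < s) : 0 ≤ bose s :=
  div_nonneg hs.le (by linarith [Real.add_one_le_exp s])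

lemma bose_le_one {s : ℝ} (hs : 0 < s) : bose s ≤ 1 := by
  have := Real.add_one_le_exp s
  rw [bose, div_le_one (by linarith)]
  linarith

lemma bose_le {s : ℝ} (hs : 0 < s) : bose s ≤ (1 + s) / Real.exp s := by
  have h := Real.add_one_le_exp s
  rw [bose, div_le_div_iff₀ (by linarith) (Real.exp_pos s)]
  nlinarith

lemma exists_bose_mul_pow_le (p : ℕ) :
    ∃ C : ℝ, 0 ≤ C ∧ ∀ s : ℝ, 0 < s → bose s * (1 + s) ^ p ≤ C := by
  refine ⟨(p + 1).factorial * Real.exp 1, by positivity, fun s hs => ?_⟩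
  have h := Real.pow_div_factorial_le_exp (1 + s) (by linarith) (p + 1)
  rw [div_le_iff₀ (by positivity), Real.exp_add] at h
  calc bose s * (1 + s) ^ p ≤ (1 + s) / Real.exp s * (1 + s) ^ p := by
        gcongr; exact bose_le hs
    _ = (1 + s) ^ (p + 1) / Real.exp s := by ring
    _ ≤ _ := by
        rw [div_le_iff₀ (Real.exp_pos s)]
        linarith

/-- The action of the Cherednik operator in the Euler direction, conjugated by `exp (ρ, ·)`,
on the family of values of a function along a Weyl group orbit. -/
def cherednikOp (D : HOData E) (z : E) (ψ : weylGroup D → ℝ) (w : weylGroup D) : ℝ :=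
  ∑ β ∈ D.Rpos, D.k β * (bose ⟪β, z⟫ * (ψ (w * weylRefl D β) - ψ w) +
    if w.1 β ∈ D.Rpos then ⟪β, z⟫ * ψ (w * weylRefl D β) else 0)

lemma inner_rhoHO (D : HOData E) (y : E) :
    ⟪rhoHO D, y⟫ = ∑ α ∈ D.Rpos, D.k α * ⟪α, y⟫ / 2 := by
  simp only [rhoHO, inner_smul_left, sum_inner, Finset.mul_sum]
  refine Finset.sum_congr rfl fun α _ => ?_
  simp only [conj_trivial]
  ring

lemma regular_of_mem_posChamber {D : HOData E} {z : E} (hz : z ∈ posChamber D)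
    (w : weylGroup D) : HORegular D (w.1 z) := by
  intro α hα
  have h : ⟪α, w.1 z⟫ = ⟪(w⁻¹).1 α, z⟫ := by
    have hinv : w.1 ((w⁻¹).1 α) = α := w.1.apply_symm_apply α
    conv_lhs => rw [← hinv]
    exact w.1.inner_map_map _ _
  rw [h]
  have hR := weyl_mem w⁻¹ hα
  rcases D.pos_or_neg _ hR with h | h
  · exact (hz _ h).ne'
  · have := hz _ h
    rw [inner_neg_left] at this
    intro h0
    linarith

lemma opdam_euler {D : HOData E} {G : E → ℝ} (hG : IsOpdamR D 0 G) (w : weylGroup D) {z : E}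
    (hz : z ∈ posChamber D) :
    fderiv ℝ G (w.1 z) (w.1 z) + ⟪rhoHO D, z⟫ * G (w.1 z) =
      cherednikOp D z (fun v => G (v.1 z)) w := by
  rw [hG.2.2 _ _ (regular_of_mem_posChamber hz w), add_zero, inner_rhoHO, inner_rhoHO,
    Finset.sum_mul, Finset.sum_mul, ← Finset.sum_add_distrib, sum_pos_weyl w,
    ← Finset.sum_add_distrib, cherednikOp]
  refine Finset.sum_congr rfl fun β hβ => ?_
  have hR := HOData.mem_of_pos hβ
  have hs : 0 < ⟪β, z⟫ := hz β hβ
  have hk := (weyl_map_mem w β hR).2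
  have hk' : D.k (-w.1 β) = D.k β := by rw [HOData.k_neg (weyl_mem w hR), hk]
  have hin : ⟪w.1 β, w.1 z⟫ = ⟪β, z⟫ := w.1.inner_map_map _ _
  simp only [weyl_mul_apply, weylRefl_apply hR, hk, hk', inner_neg_left, hin, rRefl_neg,
    rRefl_map, neg_neg, bose]
  have he : Real.exp ⟪β, z⟫ - 1 ≠ 0 := by
    have := Real.add_one_le_exp ⟪β, z⟫
    linarith
  have he2 : (1 : ℝ) - Real.exp ⟪β, z⟫ ≠ 0 := fun h => he (by linarith)
  have he' : (1 : ℝ) - Real.exp (-⟪β, z⟫) = (Real.exp ⟪β, z⟫ - 1) / Real.exp ⟪β, z⟫ := by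
    rw [Real.exp_neg]
    field_simp
  have he3 : (1 : ℝ) - Real.exp ⟪β, z⟫ = -(Real.exp ⟪β, z⟫ - 1) := by ring
  split_ifs with h
  · rw [he']
    field_simp
    ring
  · rw [he3]
    field_simp
    ring

/-- The adjoint of `cherednikOp` for the counting pairing on the Weyl group. -/
lemma sum_mul_cherednikOp (D : HOData E) [Fintype (weylGroup D)] (z : E)
    (Φ ψ : weylGroup D → ℝ) :
    ∑ w, Φ w * cherednikOp D z ψ w =
      ∑ w, ψ w * ∑ β ∈ D.Rpos, D.k β * (bose ⟪β, z⟫ * (Φ (w * weylRefl D β) - Φ w) +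
        if w.1 β ∉ D.Rpos then ⟪β, z⟫ * Φ (w * weylRefl D β) else 0) := by
  simp only [cherednikOp, Finset.mul_sum]
  rw [Finset.sum_comm, Finset.sum_comm (s := Finset.univ)]
  refine Finset.sum_congr rfl fun β hβ => ?_
  have hR := HOData.mem_of_pos hβ
  have hre : ∀ f : weylGroup D → ℝ, ∑ w, f w = ∑ w, f (w * weylRefl D β) := fun f =>
    (Equiv.sum_comp (Equiv.mulRight (weylRefl D β)) f).symm
  have hsplit : ∀ (Φ ψ : weylGroup D → ℝ) (P : weylGroup D → Prop)
      [DecidablePred P],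
      ∑ w, Φ w * (D.k β * (bose ⟪β, z⟫ * (ψ (w * weylRefl D β) - ψ w) +
        if P w then ⟪β, z⟫ * ψ (w * weylRefl D β) else 0)) =
      D.k β * ((∑ w, bose ⟪β, z⟫ * Φ w * ψ (w * weylRefl D β) +
        ∑ w, if P w then ⟪β, z⟫ * Φ w * ψ (w * weylRefl D β) else 0) -
        ∑ w, bose ⟪β, z⟫ * (Φ w * ψ w)) := by
    intro Φ ψ P _
    rw [← Finset.sum_add_distrib, ← Finset.sum_sub_distrib, Finset.mul_sum]
    refine Finset.sum_congr rfl fun w _ => ?_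
    split_ifs <;> ring
  rw [hsplit Φ ψ fun w => w.1 β ∈ D.Rpos, hsplit ψ Φ fun w => w.1 β ∉ D.Rpos]
  congr 2
  · congr 1
    · rw [hre]
      refine Finset.sum_congr rfl fun w _ => ?_
      rw [mul_assoc w, weylRefl_mul_self, mul_one]
      ring
    · rw [hre]
      refine Finset.sum_congr rfl fun w _ => ?_
      rw [mul_assoc w, weylRefl_mul_self, mul_one]
      simp only [weyl_mem_pos_refl w hR]
      split_ifs <;> ring
  · exact Finset.sum_congr rfl fun w _ => by ring

/-! ### Weights counting descending chains in the Weyl group -/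

/-- The sum over chains `v > v r_β₁ > v r_β₁ r_β₂ > ⋯` of length at most `j` of the products
of the factors `k_β (β, z)`. -/
def chainWeight (D : HOData E) (z : E) : ℕ → weylGroup D → ℝ
  | 0, _ => 1
  | j + 1, v => 1 + ∑ β ∈ D.Rpos,
      if v.1 β ∉ D.Rpos then D.k β * ⟪β, z⟫ * chainWeight D z j (v * weylRefl D β) else 0

lemma chainWeight_zero (D : HOData E) (z : E) (v : weylGroup D) : chainWeight D z 0 v = 1 := rfl

lemma chainWeight_succ (D : HOData E) (z : E) (j : ℕ) (v : weylGroup D) :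
    chainWeight D z (j + 1) v = 1 + ∑ β ∈ D.Rpos,
      if v.1 β ∉ D.Rpos then D.k β * ⟪β, z⟫ * chainWeight D z j (v * weylRefl D β) else 0 := rfl

lemma HOData.k_pos_of_pos {D : HOData E} {β : E} (hβ : β ∈ D.Rpos) : 0 < D.k β :=
  D.k_pos β (HOData.mem_of_pos hβ)

lemma one_le_chainWeight {D : HOData E} {z : E} (hz : z ∈ posChamber D) (j : ℕ) :
    ∀ v, 1 ≤ chainWeight D z j v := by
  induction j with
  | zero => exact fun v => le_rfl
  | succ j ih =>
    intro v
    rw [chainWeight_succ]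
    refine le_add_of_nonneg_right (Finset.sum_nonneg fun β hβ => ?_)
    have := hz β hβ
    have := HOData.k_pos_of_pos hβ
    have := ih (v * weylRefl D β)
    split_ifs <;> positivity

lemma chainWeight_pos {D : HOData E} {z : E} (hz : z ∈ posChamber D) (j : ℕ)
    (v : weylGroup D) : 0 < chainWeight D z j v :=
  zero_lt_one.trans_le (one_le_chainWeight hz j v)

lemma chainWeight_le_succ {D : HOData E} {z : E} (hz : z ∈ posChamber D) (j : ℕ) :
    ∀ v, chainWeight D z j v ≤ chainWeight D z (j + 1) v := by
  induction j with
  | zero => exact fun v => one_le_chainWeight hz 1 v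
  | succ j ih =>
    intro v
    rw [chainWeight_succ, chainWeight_succ D z (j + 1)]
    refine add_le_add_right (Finset.sum_le_sum fun β hβ => ?_) 1
    have := hz β hβ
    have := HOData.k_pos_of_pos hβ
    have := ih (v * weylRefl D β)
    split_ifs <;> gcongr

lemma term_le_chainWeight {D : HOData E} {z : E} (hz : z ∈ posChamber D) (j : ℕ)
    (v : weylGroup D) {β : E} (hβ : β ∈ D.Rpos) (hv : v.1 β ∉ D.Rpos) :
    D.k β * ⟪β, z⟫ * chainWeight D z j (v * weylRefl D β) ≤ chainWeight D z (j + 1) v := by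
  rw [chainWeight_succ]
  have h := Finset.single_le_sum (s := D.Rpos) (a := β) (f := fun β =>
    if v.1 β ∉ D.Rpos then D.k β * ⟪β, z⟫ * chainWeight D z j (v * weylRefl D β) else 0) ?_ hβ
  · simp only [hv, not_false_eq_true, if_true] at h
    linarith
  · intro γ hγ
    have := hz γ hγ
    have := HOData.k_pos_of_pos hγ
    have := chainWeight_pos hz j (v * weylRefl D γ)
    split_ifs <;> positivity

lemma chainWeight_at_zero (D : HOData E) (j : ℕ) (v : weylGroup D) :
    chainWeight D 0 j v = 1 := by
  cases j <;> simp [chainWeight]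

/-- Descending chains are strictly monotone for `v ↦ (v u, u)`, so their length is bounded. -/
lemma chainWeight_stable (D : HOData E) [Fintype (weylGroup D)] (z : E) :
    ∀ v, chainWeight D z (Fintype.card (weylGroup D) + 1) v =
      chainWeight D z (Fintype.card (weylGroup D)) v := by
  obtain ⟨u, hu⟩ := D.pos_char
  have lt : ∀ (v : weylGroup D) (β : E), β ∈ D.Rpos → v.1 β ∉ D.Rpos →
      ⟪v.1 u, u⟫ < ⟪(v * weylRefl D β).1 u, u⟫ := by
    intro v β hβ hv
    have hR := HOData.mem_of_pos hβ
    have h1 : 0 < ⟪β, u⟫ := (hu β hR).1 hβ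
    have h2 := HOData.neg_mem_pos_of_not_mem (weyl_mem v hR) hv
    have h3 := (hu _ (HOData.mem_of_pos h2)).1 h2
    rw [inner_neg_left] at h3
    have h4 : 0 < ⟪β, β⟫ := real_inner_self_pos.2 (D.root_ne_zero β hR)
    have h5 : 0 < ⟪coroot β, u⟫ := by rw [inner_coroot]; positivity
    rw [weyl_mul_apply, weylRefl_apply hR, rRefl, map_sub, map_smul, inner_sub_left,
      inner_smul_left]
    simp only [conj_trivial]
    nlinarith
  have key : ∀ (j : ℕ) (v : weylGroup D),
      (Finset.univ.filter fun w : weylGroup D => ⟪v.1 u, u⟫ < ⟪w.1 u, u⟫).card ≤ j →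
      chainWeight D z (j + 1) v = chainWeight D z j v := by
    intro j
    induction j with
    | zero =>
      intro v hv
      rw [chainWeight_succ, chainWeight_zero, add_eq_left]
      refine Finset.sum_eq_zero fun β hβ => ?_
      by_cases h : v.1 β ∈ D.Rpos
      · simp [h]
      · rw [Nat.le_zero, Finset.card_eq_zero, Finset.filter_eq_empty_iff] at hv
        exact absurd (lt v β hβ h) (hv (Finset.mem_univ _))
    | succ j ih =>
      intro v hv
      rw [chainWeight_succ, chainWeight_succ D z j]
      congr 1
      refine Finset.sum_congr rfl fun β hβ => ?_
      by_cases h : v.1 β ∈ D.Rpos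
      · simp [h]
      · have hlt := lt v β hβ h
        have hcard : (Finset.univ.filter fun w : weylGroup D =>
            ⟪(v * weylRefl D β).1 u, u⟫ < ⟪w.1 u, u⟫).card <
            (Finset.univ.filter fun w : weylGroup D => ⟪v.1 u, u⟫ < ⟪w.1 u, u⟫).card := by
          refine Finset.card_lt_card ((Finset.ssubset_iff_of_subset fun w hw => ?_).2
            ⟨v * weylRefl D β, by simpa using hlt,
              fun h => lt_irrefl _ (Finset.mem_filter.1 h).2⟩)
          simp only [Finset.mem_filter, Finset.mem_univ, true_and] at hw ⊢
          exact hlt.trans hw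
        rw [ih (v * weylRefl D β) (by omega)]
  exact fun v => key _ v (Finset.card_le_univ _)

lemma exists_hasDerivAt_chainWeight {D : HOData E} {x : E} (hx : x ∈ posChamber D) (j : ℕ) :
    ∀ v, ∃ d : ℝ → ℝ, ∀ t, HasDerivAt (fun t : ℝ => chainWeight D (t • x) j v) (d t) t ∧
      (0 < t → 0 ≤ t * d t ∧ t * d t ≤ j * chainWeight D (t • x) j v) := by
  induction j with
  | zero =>
    refine fun v => ⟨fun _ => 0, fun t => ⟨hasDerivAt_const t (1 : ℝ), fun _ => by simp⟩⟩
  | succ j ih =>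
    intro v
    choose d hd using ih
    refine ⟨fun t => ∑ β ∈ D.Rpos, if v.1 β ∉ D.Rpos then
      D.k β * ⟪β, x⟫ * chainWeight D (t • x) j (v * weylRefl D β) +
        D.k β * (t * ⟪β, x⟫) * d (v * weylRefl D β) t else 0, fun t => ⟨?_, fun ht => ?_⟩⟩
    · simp only [chainWeight_succ, inner_smul_right]
      refine HasDerivAt.const_add _ (HasDerivAt.fun_sum fun β _ => ?_)
      split_ifs with h
      swap
      · refine HasDerivAt.mul ?_ (hd _ t).1
        simpa using ((hasDerivAt_id t).mul_const ⟪β, x⟫).const_mul (D.k β)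
      · exact hasDerivAt_const _ _
    · have hz : t • x ∈ posChamber D := fun β hβ => by
        rw [inner_smul_right]; exact mul_pos ht (hx β hβ)
      rw [chainWeight_succ, Finset.mul_sum, mul_add, Finset.mul_sum]
      constructor
      · refine Finset.sum_nonneg fun β hβ => ?_
        split_ifs with h
        swap
        · have h1 := ((hd (v * weylRefl D β) t).2 ht).1
          have := hx β hβ
          have := HOData.k_pos_of_pos hβ
          have := chainWeight_pos hz j (v * weylRefl D β)
          have e : t * (D.k β * ⟪β, x⟫ * chainWeight D (t • x) j (v * weylRefl D β) +
            D.k β * (t * ⟪β, x⟫) * d (v * weylRefl D β) t) =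
            t * (D.k β * ⟪β, x⟫ * chainWeight D (t • x) j (v * weylRefl D β)) +
            D.k β * (t * ⟪β, x⟫) * (t * d (v * weylRefl D β) t) := by ring
          rw [e]
          positivity
        · simp
      · refine le_add_of_nonneg_of_le (by positivity) (Finset.sum_le_sum fun β hβ => ?_)
        split_ifs with h
        swap
        · have h1 := ((hd (v * weylRefl D β) t).2 ht).2
          have := hx β hβ
          have := HOData.k_pos_of_pos hβ
          have h2 : 0 ≤ D.k β * (t * ⟪β, x⟫) := by positivity
          rw [inner_smul_right]
          push_cast
          nlinarith [mul_le_mul_of_nonneg_left h1 h2]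
        · simp

lemma HOData.exists_k_le (D : HOData E) : ∃ κ : ℝ, 1 ≤ κ ∧ ∀ β ∈ D.R, D.k β ≤ κ := by
  refine ⟨1 + ∑ β ∈ D.R, D.k β, ?_, fun β hβ => ?_⟩
  · exact le_add_of_nonneg_right (Finset.sum_nonneg fun β hβ => (D.k_pos β hβ).le)
  · have := Finset.single_le_sum (f := D.k) (fun β hβ => (D.k_pos β hβ).le) hβ
    linarith

lemma HOData.exists_inner_coroot_le (D : HOData E) :
    ∃ c : ℝ, 1 ≤ c ∧ ∀ β ∈ D.R, ∀ γ ∈ D.R, ⟪coroot β, γ⟫ ≤ c := by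
  refine ⟨1 + ∑ q ∈ D.R ×ˢ D.R, |⟪coroot q.1, q.2⟫|, ?_, fun β hβ γ hγ => ?_⟩
  · exact le_add_of_nonneg_right (Finset.sum_nonneg fun _ _ => abs_nonneg _)
  · have := Finset.single_le_sum (s := D.R ×ˢ D.R) (a := (β, γ))
      (f := fun q : E × E => |⟪coroot q.1, q.2⟫|)
      (fun _ _ => abs_nonneg _) (Finset.mk_mem_product hβ hγ)
    have h := le_abs_self ⟪coroot β, γ⟫
    dsimp only at this
    linarith

/-- A single reflection changes the chain weight by at most a polynomial factor. -/
lemma exists_chainWeight_refl_le (D : HOData E) (j : ℕ) :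
    ∃ (C : ℝ) (p : ℕ), 1 ≤ C ∧ ∀ z ∈ posChamber D, ∀ β ∈ D.Rpos, ∀ v,
      chainWeight D z j (v * weylRefl D β) ≤
        C * (1 + ⟪β, z⟫) ^ p * chainWeight D z j v := by
  obtain ⟨κ, hκ1, hκ⟩ := D.exists_k_le
  obtain ⟨c, hc1, hc⟩ := D.exists_inner_coroot_le
  induction j with
  | zero => exact ⟨1, 0, le_rfl, fun z _ β _ v => by simp [chainWeight_zero]⟩
  | succ j ih =>
    obtain ⟨C, p, hC1, hC⟩ := ih
    set M : ℝ := C * c * (1 + κ * C * 2 ^ p) + κ * c * C * C * c ^ p with hM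
    have hM0 : 0 ≤ M := by positivity
    refine ⟨1 + D.Rpos.card * M, 2 * p + 1, le_add_of_nonneg_right (by positivity),
      fun z hz β hβ v => ?_⟩
    have hs : 0 < ⟪β, z⟫ := hz β hβ
    set s : ℝ := ⟪β, z⟫
    have hβR := HOData.mem_of_pos hβ
    have hΦ := one_le_chainWeight hz (j + 1) v
    have hpow : 1 ≤ (1 + s) ^ (2 * p + 1) := one_le_pow₀ (by linarith)
    have hterm : ∀ γ ∈ D.Rpos, (if (v * weylRefl D β).1 γ ∉ D.Rpos then
        D.k γ * ⟪γ, z⟫ * chainWeight D z j (v * weylRefl D β * weylRefl D γ) else 0) ≤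
        M * (1 + s) ^ (2 * p + 1) * chainWeight D z (j + 1) v := by
      intro γ hγ
      by_cases h : (v * weylRefl D β).1 γ ∈ D.Rpos
      · simp only [h, not_true_eq_false, if_false]
        positivity
      simp only [h, not_false_eq_true, if_true]
      have hγR := HOData.mem_of_pos hγ
      have hγz := hz γ hγ
      have hkγ := D.k_pos γ hγR
      have hkκ := hκ γ hγR
      have hcγ := hc β hβR γ hγR
      have hmono := chainWeight_le_succ hz j v
      have hΦ0 := chainWeight_pos hz j v
      have hγ'R := D.refl_mem β hβR γ hγR
      have hin : ⟪rRefl β γ, z⟫ = ⟪γ, z⟫ - ⟪coroot β, γ⟫ * s := inner_rRefl_left _ _ _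
      by_cases hγ' : rRefl β γ ∈ D.Rpos
      · have hz' := hz _ hγ'
        have hle : ⟪γ, z⟫ ≤ ⟪rRefl β γ, z⟫ + c * s := by nlinarith
        have hk' : D.k (rRefl β γ) = D.k γ := D.k_inv β hβR γ hγR
        have hv' : v.1 (rRefl β γ) ∉ D.Rpos := by
          rwa [weyl_mul_apply, weylRefl_apply hβR] at h
        have hstep := term_le_chainWeight hz j v hγ' hv'
        rw [hk'] at hstep
        have hcomp := hC z hz β hβ (v * weylRefl D (rRefl β γ))
        rw [mul_assoc v, weylRefl_mul_comm hβR hγR hγ'R (Or.inl rfl), ← mul_assoc]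
        have hY0 := chainWeight_pos hz j (v * weylRefl D (rRefl β γ) * weylRefl D β)
        have hX0 := chainWeight_pos hz j (v * weylRefl D (rRefl β γ))
        have hX : D.k γ * chainWeight D z j (v * weylRefl D (rRefl β γ)) ≤
            (1 + κ * C * 2 ^ p) * chainWeight D z (j + 1) v := by
          rcases le_total 1 ⟪rRefl β γ, z⟫ with h1 | h1
          · calc D.k γ * chainWeight D z j (v * weylRefl D (rRefl β γ))
                ≤ D.k γ * ⟪rRefl β γ, z⟫ * chainWeight D z j (v * weylRefl D (rRefl β γ)) := by
                  gcongr
                  exact le_mul_of_one_le_right hkγ.le h1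
              _ ≤ 1 * chainWeight D z (j + 1) v := by rw [one_mul]; exact hstep
              _ ≤ _ := by
                  gcongr
                  exact le_add_of_nonneg_right (by positivity)
          · calc D.k γ * chainWeight D z j (v * weylRefl D (rRefl β γ))
                ≤ κ * (C * (1 + ⟪rRefl β γ, z⟫) ^ p * chainWeight D z j v) := by
                  gcongr
                  exact hC z hz _ hγ' v
              _ ≤ κ * (C * 2 ^ p * chainWeight D z (j + 1) v) := by
                  gcongr
                  linarith
              _ ≤ _ := by nlinarith
        calc D.k γ * ⟪γ, z⟫ * chainWeight D z j (v * weylRefl D (rRefl β γ) * weylRefl D β)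
            ≤ D.k γ * (⟪rRefl β γ, z⟫ + c * s) *
              (C * (1 + s) ^ p * chainWeight D z j (v * weylRefl D (rRefl β γ))) := by
              gcongr
          _ = C * (1 + s) ^ p *
              (D.k γ * ⟪rRefl β γ, z⟫ * chainWeight D z j (v * weylRefl D (rRefl β γ)) +
              c * s * (D.k γ * chainWeight D z j (v * weylRefl D (rRefl β γ)))) := by ring
          _ ≤ C * (1 + s) ^ p * (chainWeight D z (j + 1) v +
              c * s * ((1 + κ * C * 2 ^ p) * chainWeight D z (j + 1) v)) := by gcongr
          _ ≤ C * (1 + s) ^ p * (c * (1 + κ * C * 2 ^ p) * chainWeight D z (j + 1) v +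
              c * s * ((1 + κ * C * 2 ^ p) * chainWeight D z (j + 1) v)) := by
              gcongr
              refine le_mul_of_one_le_left (by positivity) (one_le_mul_of_one_le_of_one_le hc1 ?_)
              exact le_add_of_nonneg_right (by positivity)
          _ = C * c * (1 + κ * C * 2 ^ p) * (1 + s) ^ (p + 1) * chainWeight D z (j + 1) v := by
              ring
          _ ≤ M * (1 + s) ^ (2 * p + 1) * chainWeight D z (j + 1) v := by
              gcongr
              · rw [hM]; exact le_add_of_nonneg_right (by positivity)
              · linarith
              · omega
      · have hneg := HOData.neg_mem_pos_of_not_mem hγ'R hγ'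
        have hz' := hz _ hneg
        rw [inner_neg_left] at hz'
        have hle : ⟪γ, z⟫ ≤ c * s := by nlinarith
        have h1 := hC z hz γ hγ (v * weylRefl D β)
        have h2 := hC z hz β hβ v
        have hX0 := chainWeight_pos hz j (v * weylRefl D β * weylRefl D γ)
        have hbase : 1 + ⟪γ, z⟫ ≤ c * (1 + s) := by linarith
        calc D.k γ * ⟪γ, z⟫ * chainWeight D z j (v * weylRefl D β * weylRefl D γ)
            ≤ κ * (c * (1 + s)) * (C * (c * (1 + s)) ^ p *
              (C * (1 + s) ^ p * chainWeight D z (j + 1) v)) := by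
              gcongr
              · linarith
              · refine h1.trans ?_
                have := chainWeight_pos hz j (v * weylRefl D β)
                gcongr
                refine h2.trans ?_
                gcongr
          _ = κ * c * C * C * c ^ p * (1 + s) ^ (2 * p + 1) * chainWeight D z (j + 1) v := by
              rw [mul_pow]; ring
          _ ≤ M * (1 + s) ^ (2 * p + 1) * chainWeight D z (j + 1) v := by
              gcongr
              rw [hM]; exact le_add_of_nonneg_left (by positivity)
    rw [chainWeight_succ]
    have hsum := Finset.sum_le_card_nsmul _ _ _ hterm
    rw [nsmul_eq_mul] at hsum
    have h1 : 1 ≤ (1 + s) ^ (2 * p + 1) * chainWeight D z (j + 1) v :=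
      one_le_mul_of_one_le_of_one_le hpow hΦ
    linarith
/-! ### Evolution along rays -/

/-- The adjoint of `cherednikOp` applied to a chain weight is, up to a multiple of that weight,
the next chain weight. -/
lemma exists_adjoint_chainWeight_bounds (D : HOData E) (j : ℕ) :
    ∃ C : ℝ, 0 ≤ C ∧ ∀ z ∈ posChamber D, ∀ w : weylGroup D,
      chainWeight D z (j + 1) w - C * chainWeight D z j w ≤
        (∑ β ∈ D.Rpos, D.k β * (bose ⟪β, z⟫ *
          (chainWeight D z j (w * weylRefl D β) - chainWeight D z j w) +
          if w.1 β ∉ D.Rpos then ⟪β, z⟫ * chainWeight D z j (w * weylRefl D β) else 0)) ∧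
      (∑ β ∈ D.Rpos, D.k β * (bose ⟪β, z⟫ *
          (chainWeight D z j (w * weylRefl D β) - chainWeight D z j w) +
          if w.1 β ∉ D.Rpos then ⟪β, z⟫ * chainWeight D z j (w * weylRefl D β) else 0)) ≤
        chainWeight D z (j + 1) w + C * chainWeight D z j w := by
  obtain ⟨C, p, hC1, hC⟩ := exists_chainWeight_refl_le D j
  obtain ⟨B, hB0, hB⟩ := exists_bose_mul_pow_le p
  have hk : ∀ β ∈ D.Rpos, 0 ≤ D.k β := fun β hβ => (HOData.k_pos_of_pos hβ).le
  have hκ : 0 ≤ ∑ β ∈ D.Rpos, D.k β := Finset.sum_nonneg hk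
  refine ⟨1 + (∑ β ∈ D.Rpos, D.k β) * (1 + C * B), by positivity, fun z hz w => ?_⟩
  have hΦ := one_le_chainWeight hz j w
  have hsplit : (∑ β ∈ D.Rpos, D.k β * (bose ⟪β, z⟫ *
      (chainWeight D z j (w * weylRefl D β) - chainWeight D z j w) +
      if w.1 β ∉ D.Rpos then ⟪β, z⟫ * chainWeight D z j (w * weylRefl D β) else 0)) =
      (∑ β ∈ D.Rpos, D.k β * (bose ⟪β, z⟫ *
      (chainWeight D z j (w * weylRefl D β) - chainWeight D z j w))) +
      (chainWeight D z (j + 1) w - 1) := by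
    rw [chainWeight_succ, add_sub_cancel_left, ← Finset.sum_add_distrib]
    refine Finset.sum_congr rfl fun β _ => ?_
    split_ifs <;> ring
  have hlow : -((∑ β ∈ D.Rpos, D.k β) * chainWeight D z j w) ≤
      ∑ β ∈ D.Rpos, D.k β * (bose ⟪β, z⟫ *
      (chainWeight D z j (w * weylRefl D β) - chainWeight D z j w)) := by
    rw [Finset.sum_mul, ← Finset.sum_neg_distrib]
    refine Finset.sum_le_sum fun β hβ => ?_
    have h1 := bose_nonneg (hz β hβ)
    have h2 := bose_le_one (hz β hβ)
    have h3 := chainWeight_pos hz j (w * weylRefl D β)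
    rw [← mul_neg]
    refine mul_le_mul_of_nonneg_left ?_ (hk β hβ)
    nlinarith [mul_nonneg h1 h3.le]
  have hup : (∑ β ∈ D.Rpos, D.k β * (bose ⟪β, z⟫ *
      (chainWeight D z j (w * weylRefl D β) - chainWeight D z j w))) ≤
      (∑ β ∈ D.Rpos, D.k β) * (C * B * chainWeight D z j w) := by
    rw [Finset.sum_mul]
    refine Finset.sum_le_sum fun β hβ => ?_
    have h1 := bose_nonneg (hz β hβ)
    refine mul_le_mul_of_nonneg_left ?_ (hk β hβ)
    calc bose ⟪β, z⟫ * (chainWeight D z j (w * weylRefl D β) - chainWeight D z j w)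
        ≤ bose ⟪β, z⟫ * (C * (1 + ⟪β, z⟫) ^ p * chainWeight D z j w) := by
          refine mul_le_mul_of_nonneg_left ?_ h1
          linarith [hC z hz β hβ w]
      _ = C * (bose ⟪β, z⟫ * (1 + ⟪β, z⟫) ^ p) * chainWeight D z j w := by ring
      _ ≤ C * B * chainWeight D z j w := by
          gcongr
          exact hB _ (hz β hβ)
  have h4 : 0 ≤ (∑ β ∈ D.Rpos, D.k β) * (C * B * chainWeight D z j w) := by positivity
  have h5 : 0 ≤ (∑ β ∈ D.Rpos, D.k β) * chainWeight D z j w := by positivity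
  rw [hsplit]
  constructor <;> nlinarith

/-- The value of `exp (ρ, ·) G ∘ w` along the ray through `x`. -/
def rayValue (D : HOData E) (G : E → ℝ) (x : E) (w : weylGroup D) (t : ℝ) : ℝ :=
  Real.exp (t * ⟪rhoHO D, x⟫) * G (w.1 (t • x))

lemma rayValue_zero {D : HOData E} {G : E → ℝ} (hG : IsOpdamR D 0 G) (x : E)
    (w : weylGroup D) : rayValue D G x w 0 = 1 := by
  simp [rayValue, hG.2.1]

lemma smul_mem_posChamber {D : HOData E} {x : E} (hx : x ∈ posChamber D) {t : ℝ}
    (ht : 0 < t) : t • x ∈ posChamber D := fun β hβ => by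
  rw [inner_smul_right]
  exact mul_pos ht (hx β hβ)

lemma cherednikOp_const_mul (D : HOData E) (z : E) (c : ℝ) (ψ : weylGroup D → ℝ)
    (w : weylGroup D) :
    cherednikOp D z (fun v => c * ψ v) w = c * cherednikOp D z ψ w := by
  rw [cherednikOp, cherednikOp, Finset.mul_sum]
  refine Finset.sum_congr rfl fun β _ => ?_
  split_ifs <;> ring

lemma exists_hasDerivAt_rayValue {D : HOData E} {G : E → ℝ} (hG : IsOpdamR D 0 G) {x : E}
    (hx : x ∈ posChamber D) (w : weylGroup D) :
    ∃ d : ℝ → ℝ, ∀ t, HasDerivAt (rayValue D G x w) (d t) t ∧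
      (0 < t → t * d t = cherednikOp D (t • x) (fun v => rayValue D G x v t) w) := by
  refine ⟨fun t => Real.exp (t * ⟪rhoHO D, x⟫) * ⟪rhoHO D, x⟫ * G (w.1 (t • x)) +
    Real.exp (t * ⟪rhoHO D, x⟫) * fderiv ℝ G (w.1 (t • x)) (w.1 x), fun t => ⟨?_, fun ht => ?_⟩⟩
  · refine HasDerivAt.mul ?_ ?_
    · simpa using ((hasDerivAt_id t).mul_const ⟪rhoHO D, x⟫).exp
    · have h1 : HasFDerivAt G (fderiv ℝ G (w.1 (t • x))) (w.1 (t • x)) :=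
        (hG.1 _ (Set.mem_univ _)).differentiableAt.hasFDerivAt
      have h2 : HasDerivAt (fun t : ℝ => w.1 (t • x)) (w.1 x) t := by
        simp only [map_smul]
        simpa using (hasDerivAt_id t).smul_const (w.1 x)
      exact h1.comp_hasDerivAt t h2
  · have h := opdam_euler hG w (smul_mem_posChamber hx ht)
    simp only [rayValue]
    rw [cherednikOp_const_mul, ← h]
    have h3 : fderiv ℝ G (w.1 (t • x)) (w.1 (t • x)) =
        t * fderiv ℝ G (w.1 (t • x)) (w.1 x) := by
      conv_lhs => rw [map_smul w.1 t x]
      rw [map_smul, smul_eq_mul, map_smul w.1 t x]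
    rw [h3, inner_smul_right]
    ring

/-- Positivity for a finite system whose components decay at most like a power of time as long
as all of them are nonnegative. -/
lemma pos_of_system {ι : Type*} [Finite ι] {ψ d : ι → ℝ → ℝ} {κ : ℝ} (hκ : 0 ≤ κ)
    (hd : ∀ i t, HasDerivAt (ψ i) (d i t) t) (h0 : ∀ i, 0 < ψ i 0)
    (hineq : ∀ t, 0 < t → (∀ i, 0 ≤ ψ i t) → ∀ i, -(κ * ψ i t) ≤ t * d i t) :
    ∀ t, 0 ≤ t → ∀ i, 0 < ψ i t := by
  by_contra! hcon
  have hcont : ∀ i, Continuous (ψ i) := fun i =>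
    continuous_iff_continuousAt.2 fun t => (hd i t).continuousAt
  set S : Set ℝ := {t | 0 ≤ t} ∩ ⋃ i, {t | ψ i t ≤ 0} with hS
  have hclosed : IsClosed S := (isClosed_le continuous_const continuous_id).inter
    (isClosed_iUnion_of_finite fun i => isClosed_le (hcont i) continuous_const)
  have hne : S.Nonempty := by
    obtain ⟨t, ht, i, hi⟩ := hcon
    exact ⟨t, ht, Set.mem_iUnion.2 ⟨i, hi⟩⟩
  have hbdd : BddBelow S := ⟨0, fun t ht => ht.1⟩
  obtain ⟨ht0, hmem⟩ := hclosed.csInf_mem hne hbdd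
  set T := sInf S
  obtain ⟨i, hi⟩ := Set.mem_iUnion.1 hmem
  have hbefore : ∀ t, 0 ≤ t → t < T → ∀ i, 0 < ψ i t := by
    intro t ht htT i
    by_contra! h
    exact absurd (csInf_le hbdd ⟨ht, Set.mem_iUnion.2 ⟨i, h⟩⟩) (not_le.2 htT)
  have hT : 0 < T := by
    rcases eq_or_lt_of_le (show (0 : ℝ) ≤ T from ht0) with h | h
    · have h1 : ψ i T ≤ 0 := hi
      rw [← h] at h1
      exact absurd (h0 i) (not_lt.2 h1)
    · exact h
  have hder : ∀ t, HasDerivAt (fun t => Real.exp (2 * κ / T * t) * ψ i t)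
      (Real.exp (2 * κ / T * t) * (2 * κ / T) * ψ i t +
        Real.exp (2 * κ / T * t) * d i t) t := by
    intro t
    refine HasDerivAt.mul ?_ (hd i t)
    simpa using ((hasDerivAt_id t).const_mul (2 * κ / T)).exp
  have hmono : MonotoneOn (fun t => Real.exp (2 * κ / T * t) * ψ i t) (Set.Icc (T / 2) T) := by
    refine monotoneOn_of_deriv_nonneg (convex_Icc _ _)
      (fun t _ => (hder t).continuousAt.continuousWithinAt)
      (fun t _ => (hder t).differentiableAt.differentiableWithinAt) fun t ht => ?_
    rw [interior_Icc] at ht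
    have ht' : 0 < t := by linarith [ht.1]
    have hpos := hbefore t ht'.le ht.2
    have h1 := hineq t ht' (fun i => (hpos i).le) i
    rw [(hder t).deriv, mul_assoc, ← mul_add]
    refine mul_nonneg (Real.exp_pos _).le ?_
    have h2 : κ ≤ 2 * κ / T * t := by
      rw [div_mul_eq_mul_div, le_div_iff₀ hT]
      nlinarith [ht.1]
    have h3 : 0 ≤ t * (2 * κ / T * ψ i t + d i t) := by
      nlinarith [mul_le_mul_of_nonneg_right h2 (hpos i).le]
    exact nonneg_of_mul_nonneg_right h3 ht'
  have h1 := hmono (Set.left_mem_Icc.2 (by linarith)) (Set.right_mem_Icc.2 (by linarith))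
    (by linarith : T / 2 ≤ T)
  have h2 := mul_pos (Real.exp_pos (2 * κ / T * (T / 2)))
    (hbefore (T / 2) (by linarith) (by linarith) i)
  have h3 : ψ i T ≤ 0 := hi
  have h4 := Real.exp_pos (2 * κ / T * T)
  dsimp only at h1
  nlinarith

lemma rayValue_pos {D : HOData E} [Fintype (weylGroup D)] {G : E → ℝ} (hG : IsOpdamR D 0 G)
    {x : E} (hx : x ∈ posChamber D) :
    ∀ t, 0 ≤ t → ∀ w, 0 < rayValue D G x w t := by
  choose d hd using exists_hasDerivAt_rayValue hG hx
  have hk : ∀ β ∈ D.Rpos, 0 ≤ D.k β := fun β hβ => (HOData.k_pos_of_pos hβ).le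
  refine pos_of_system (ψ := rayValue D G x) (d := d) (Finset.sum_nonneg hk)
    (fun w t => (hd w t).1) (fun w => by rw [rayValue_zero hG]; exact one_pos) ?_
  intro t ht hnn w
  rw [(hd w t).2 ht, cherednikOp, Finset.sum_mul, ← Finset.sum_neg_distrib]
  refine Finset.sum_le_sum fun β hβ => ?_
  have hz := smul_mem_posChamber hx ht β hβ
  have h1 := bose_nonneg hz
  have h2 := bose_le_one hz
  have h3 := hnn (w * weylRefl D β)
  have h4 := hnn w
  have h5 : 0 ≤ if w.1 β ∈ D.Rpos then ⟪β, t • x⟫ * rayValue D G x (w * weylRefl D β) t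
      else 0 := by
    split_ifs <;> positivity
  rw [← mul_neg]
  refine mul_le_mul_of_nonneg_left ?_ (hk β hβ)
  nlinarith [mul_nonneg h1 h3]

/-- The moment of order `j` of the orbit values along the ray through `x`. -/
def rayMoment (D : HOData E) [Fintype (weylGroup D)] (G : E → ℝ) (x : E) (j : ℕ) (t : ℝ) : ℝ :=
  ∑ w : weylGroup D, chainWeight D (t • x) j w * rayValue D G x w t

lemma rayMoment_zero {D : HOData E} [Fintype (weylGroup D)] {G : E → ℝ} (hG : IsOpdamR D 0 G)
    (x : E) (j : ℕ) : rayMoment D G x j 0 = Fintype.card (weylGroup D) := by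
  simp [rayMoment, chainWeight_at_zero, rayValue_zero hG]

lemma rayMoment_pos {D : HOData E} [Fintype (weylGroup D)] {G : E → ℝ} (hG : IsOpdamR D 0 G)
    {x : E} (hx : x ∈ posChamber D) (j : ℕ) {t : ℝ} (ht : 0 < t) : 0 < rayMoment D G x j t :=
  Finset.sum_pos (fun w _ => mul_pos (chainWeight_pos (smul_mem_posChamber hx ht) j w)
    (rayValue_pos hG hx t ht.le w)) Finset.univ_nonempty

lemma exists_rayMoment_deriv_bounds (D : HOData E) [Fintype (weylGroup D)] {G : E → ℝ}
    (hG : IsOpdamR D 0 G) (j : ℕ) :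
    ∃ C : ℝ, 0 ≤ C ∧ ∀ x ∈ posChamber D, ∃ d : ℝ → ℝ, ∀ t,
      HasDerivAt (rayMoment D G x j) (d t) t ∧
      (0 < t → rayMoment D G x (j + 1) t - C * rayMoment D G x j t ≤ t * d t ∧
        t * d t ≤ rayMoment D G x (j + 1) t + C * rayMoment D G x j t) := by
  obtain ⟨C, hC0, hC⟩ := exists_adjoint_chainWeight_bounds D j
  refine ⟨C + j, by positivity, fun x hx => ?_⟩
  choose d hd using exists_hasDerivAt_rayValue hG hx
  choose e he using exists_hasDerivAt_chainWeight hx j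
  refine ⟨fun t => ∑ w, (e w t * rayValue D G x w t + chainWeight D (t • x) j w * d w t),
    fun t => ⟨HasDerivAt.fun_sum fun w _ => (he w t).1.mul (hd w t).1, fun ht => ?_⟩⟩
  have hz := smul_mem_posChamber hx ht
  have hψ := rayValue_pos hG hx t ht.le
  have hsplit : t * ∑ w, (e w t * rayValue D G x w t + chainWeight D (t • x) j w * d w t) =
      ∑ w, rayValue D G x w t * (t * e w t) +
        ∑ w, chainWeight D (t • x) j w *
          cherednikOp D (t • x) (fun v => rayValue D G x v t) w := by
    rw [Finset.mul_sum, ← Finset.sum_add_distrib]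
    refine Finset.sum_congr rfl fun w _ => ?_
    rw [← (hd w t).2 ht]
    ring
  rw [hsplit, sum_mul_cherednikOp, ← Finset.sum_add_distrib]
  simp only [rayMoment, Finset.mul_sum (s := Finset.univ)]
  rw [← Finset.sum_sub_distrib, ← Finset.sum_add_distrib]
  constructor <;> refine Finset.sum_le_sum fun w _ => ?_
  · have h1 := ((he w t).2 ht).1
    have h2 := (hC _ hz w).1
    have h3 := chainWeight_pos hz j w
    rw [← mul_add]
    have h4 : chainWeight D (t • x) (j + 1) w - (C + j) * chainWeight D (t • x) j w ≤
        chainWeight D (t • x) (j + 1) w - C * chainWeight D (t • x) j w + t * e w t := by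
      nlinarith [mul_nonneg (Nat.cast_nonneg (α := ℝ) j) h3.le]
    nlinarith [mul_le_mul_of_nonneg_left (h4.trans (add_le_add_left h2 _)) (hψ w).le]
  · have h1 := ((he w t).2 ht).2
    have h2 := (hC _ hz w).2
    rw [← mul_add]
    nlinarith [mul_le_mul_of_nonneg_left (add_le_add h1 h2) (hψ w).le]

/-- Successive moments are uniformly comparable. -/
lemma exists_rayMoment_succ_le (D : HOData E) [Fintype (weylGroup D)] {G : E → ℝ}
    (hG : IsOpdamR D 0 G) {j : ℕ} (hj : j ≤ Fintype.card (weylGroup D)) :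
    ∃ K : ℝ, 0 ≤ K ∧ ∀ x ∈ posChamber D, ∀ t, 0 < t →
      rayMoment D G x (j + 1) t ≤ K * rayMoment D G x j t := by
  induction hj using Nat.decreasingInduction with
  | self =>
    refine ⟨1, zero_le_one, fun x _ t _ => ?_⟩
    simp [rayMoment, chainWeight_stable]
  | of_succ j _ ih =>
    obtain ⟨K, hK0, hK⟩ := ih
    obtain ⟨C, hC0, hC⟩ := exists_rayMoment_deriv_bounds D hG j
    obtain ⟨C', hC0', hC'⟩ := exists_rayMoment_deriv_bounds D hG (j + 1)
    set L := K + C + C' + 2 with hL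
    refine ⟨L, by positivity, fun x hx t ht => ?_⟩
    obtain ⟨d, hd⟩ := hC x hx
    obtain ⟨d', hd'⟩ := hC' x hx
    have hder : ∀ s, HasDerivAt (fun s => rayMoment D G x (j + 1) s - L * rayMoment D G x j s)
        (d' s - L * d s) s := fun s => (hd' s).1.sub ((hd s).1.const_mul L)
    have hcard : (0 : ℝ) < Fintype.card (weylGroup D) := by exact_mod_cast Fintype.card_pos
    have hstart : rayMoment D G x (j + 1) 0 - L * rayMoment D G x j 0 < 0 := by
      rw [rayMoment_zero hG, rayMoment_zero hG]
      nlinarith [mul_nonneg (add_nonneg (add_nonneg hK0 hC0) hC0') hcard.le]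
    have hfence := image_le_of_deriv_right_lt_deriv_boundary (a := 0) (b := t)
      (B := fun _ => 0) (B' := fun _ => 0)
      (fun s _ => (hder s).continuousAt.continuousWithinAt)
      (fun s _ => (hder s).hasDerivWithinAt) hstart.le (fun s => hasDerivAt_const s 0) ?_
      (Set.right_mem_Icc.2 ht.le)
    · linarith
    intro s hs heq
    have hs0 : 0 < s := by
      rcases eq_or_lt_of_le hs.1 with h | h
      · rw [← h] at heq
        exact absurd heq hstart.ne
      · exact h
    have hlow := ((hd s).2 hs0).1
    have hup := ((hd' s).2 hs0).2
    have hnext := hK x hx s hs0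
    have hpos := rayMoment_pos hG hx j hs0
    have hpos' := rayMoment_pos hG hx (j + 1) hs0
    have hneg : s * (d' s - L * d s) < 0 := by
      have h1 : L * (rayMoment D G x (j + 1) s - C * rayMoment D G x j s) ≤ L * (s * d s) :=
        mul_le_mul_of_nonneg_left hlow (by positivity)
      have h2 : L * rayMoment D G x j s = rayMoment D G x (j + 1) s := by linarith
      have h3 : L * (C * rayMoment D G x j s) = C * rayMoment D G x (j + 1) s := by
        rw [← h2]; ring
      have h4 : L * rayMoment D G x (j + 1) s = K * rayMoment D G x (j + 1) s +
          C * rayMoment D G x (j + 1) s + C' * rayMoment D G x (j + 1) s +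
          2 * rayMoment D G x (j + 1) s := by
        rw [hL]; ring
      linarith
    exact (pos_iff_neg_of_mul_neg hneg).1 hs0

/-! ### The symmetrized function -/

lemma sum_cherednikOp (D : HOData E) [Fintype (weylGroup D)] (z : E) (ψ : weylGroup D → ℝ) :
    ∑ w, cherednikOp D z ψ w = ∑ w, (chainWeight D z 1 w - 1) * ψ w := by
  have h := sum_mul_cherednikOp D z (fun _ => 1) ψ
  simp only [one_mul] at h
  rw [h]
  refine Finset.sum_congr rfl fun w _ => ?_
  rw [chainWeight_succ, add_sub_cancel_left, mul_comm]
  congr 1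
  refine Finset.sum_congr rfl fun β _ => ?_
  rw [chainWeight_zero]
  split_ifs <;> ring

lemma hasFDerivAt_Fsym {D : HOData E} [Fintype (weylGroup D)] {G : E → ℝ}
    (hG : IsOpdamR D 0 G) (x : E) :
    HasFDerivAt (Fsym D G) ((Fintype.card (weylGroup D) : ℝ)⁻¹ • ∑ w : weylGroup D,
      (fderiv ℝ G (w.1 x)).comp (w.1.toContinuousLinearEquiv : E →L[ℝ] E)) x := by
  refine HasFDerivAt.const_mul (HasFDerivAt.fun_sum fun w _ => ?_) _
  exact (hG.1 _ (Set.mem_univ _)).differentiableAt.hasFDerivAt.comp x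
    w.1.toContinuousLinearEquiv.hasFDerivAt

lemma contDiff_Fsym {D : HOData E} [Fintype (weylGroup D)] {G : E → ℝ}
    (hG : IsOpdamR D 0 G) : ContDiff ℝ 1 (Fsym D G) := by
  have h : ContDiff ℝ 1 G := contDiffOn_univ.1 (hG.1.contDiffOn uniqueDiffOn_univ)
  exact contDiff_const.mul (ContDiff.sum fun w _ => h.comp w.1.contDiff)

lemma euler_Fsym {D : HOData E} [Fintype (weylGroup D)] {G : E → ℝ} (hG : IsOpdamR D 0 G)
    {x : E} (hx : x ∈ posChamber D) :
    ⟪rhoHO D, x⟫ * Fsym D G x + fderiv ℝ (Fsym D G) x x =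
      (Fintype.card (weylGroup D) : ℝ)⁻¹ *
        ∑ w : weylGroup D, (chainWeight D x 1 w - 1) * G (w.1 x) := by
  rw [← sum_cherednikOp D x fun w => G (w.1 x), (hasFDerivAt_Fsym hG x).fderiv, Fsym]
  simp only [← opdam_euler hG _ hx, Finset.sum_add_distrib, ← Finset.mul_sum]
  simp only [smul_apply, sum_apply, smul_eq_mul,
    ContinuousLinearMap.comp_apply]
  rw [mul_add, add_comm]
  congr 1
  ring

lemma opdam_pos {D : HOData E} [Fintype (weylGroup D)] {G : E → ℝ} (hG : IsOpdamR D 0 G)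
    {x : E} (hx : x ∈ posChamber D) (w : weylGroup D) : 0 < G (w.1 x) := by
  have h := rayValue_pos hG hx 1 zero_le_one w
  rw [rayValue, one_smul] at h
  exact pos_of_mul_pos_right h (Real.exp_pos _).le

lemma rayMoment_one (D : HOData E) [Fintype (weylGroup D)] (G : E → ℝ) (x : E) (j : ℕ) :
    rayMoment D G x j 1 =
      Real.exp ⟪rhoHO D, x⟫ * ∑ w : weylGroup D, chainWeight D x j w * G (w.1 x) := by
  simp only [rayMoment, rayValue, one_smul, one_mul, Finset.mul_sum]
  exact Finset.sum_congr rfl fun w _ => by ring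

lemma exp_neg_le_Fsym {D : HOData E} [Fintype (weylGroup D)] {G : E → ℝ}
    (hG : IsOpdamR D 0 G) {x : E} (hx : x ∈ posChamber D) :
    Real.exp (-⟪rhoHO D, x⟫) ≤ Fsym D G x := by
  choose d hd using exists_hasDerivAt_rayValue hG hx
  have hder : ∀ t, HasDerivAt (fun t => ∑ w, rayValue D G x w t) (∑ w, d w t) t := fun t =>
    HasDerivAt.fun_sum fun w _ => (hd w t).1
  have hmono : MonotoneOn (fun t => ∑ w, rayValue D G x w t) (Set.Icc 0 1) := by
    refine monotoneOn_of_deriv_nonneg (convex_Icc _ _)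
      (fun t _ => (hder t).continuousAt.continuousWithinAt)
      (fun t _ => (hder t).differentiableAt.differentiableWithinAt) fun t ht => ?_
    rw [interior_Icc] at ht
    rw [(hder t).deriv]
    refine nonneg_of_mul_nonneg_right (b := ∑ w, d w t) (a := t) ?_ ht.1
    rw [Finset.mul_sum, Finset.sum_congr rfl fun w _ => (hd w t).2 ht.1, sum_cherednikOp]
    exact Finset.sum_nonneg fun w _ => mul_nonneg
      (sub_nonneg.2 (one_le_chainWeight (smul_mem_posChamber hx ht.1) 1 w))
      (rayValue_pos hG hx t ht.1.le w).le
  have h := hmono (Set.left_mem_Icc.2 zero_le_one) (Set.right_mem_Icc.2 zero_le_one) zero_le_one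
  have hcard : (0 : ℝ) < Fintype.card (weylGroup D) := by exact_mod_cast Fintype.card_pos
  simp only [rayValue_zero hG, Finset.sum_const, Finset.card_univ, nsmul_eq_mul, mul_one] at h
  simp only [rayValue, one_mul, one_smul, ← Finset.mul_sum] at h
  rw [Fsym, Real.exp_neg, inv_mul_eq_div, inv_le_iff_one_le_mul₀ (Real.exp_pos _),
    div_mul_eq_mul_div, le_div_iff₀ hcard]
  linarith

lemma exists_euler_Fsym_bounds (D : HOData E) [Fintype (weylGroup D)] {G : E → ℝ}
    (hG : IsOpdamR D 0 G) :
    ∃ K : ℝ, 0 < K ∧ ∀ x ∈ closure (posChamber D),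
      Real.exp (-⟪rhoHO D, x⟫) ≤ Fsym D G x ∧
      0 ≤ ⟪rhoHO D, x⟫ * Fsym D G x + fderiv ℝ (Fsym D G) x x ∧
      ⟪rhoHO D, x⟫ * Fsym D G x + fderiv ℝ (Fsym D G) x x ≤ K * Fsym D G x := by
  obtain ⟨K, hK0, hK⟩ := exists_rayMoment_succ_le D hG (Nat.zero_le _)
  have hF := (contDiff_Fsym hG).continuous
  have hF' : Continuous fun x => fderiv ℝ (Fsym D G) x x :=
    ((contDiff_Fsym hG).continuous_fderiv one_ne_zero).clm_apply continuous_id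
  have hρ : Continuous fun x : E => ⟪rhoHO D, x⟫ := continuous_const.inner continuous_id
  have hE := (hρ.mul hF).add hF'
  refine ⟨K + 1, by linarith, fun x hx => ?_⟩
  refine closure_minimal (s := posChamber D) (t := {x | Real.exp (-⟪rhoHO D, x⟫) ≤ Fsym D G x ∧
      0 ≤ ⟪rhoHO D, x⟫ * Fsym D G x + fderiv ℝ (Fsym D G) x x ∧
      ⟪rhoHO D, x⟫ * Fsym D G x + fderiv ℝ (Fsym D G) x x ≤ (K + 1) * Fsym D G x})
    (fun x hx => ⟨exp_neg_le_Fsym hG hx, ?_, ?_⟩)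
    ((isClosed_le (Real.continuous_exp.comp hρ.neg) hF).inter
      ((isClosed_le continuous_const hE).inter (isClosed_le hE (continuous_const.mul hF)))) hx
  · rw [euler_Fsym hG hx]
    exact mul_nonneg (by positivity) (Finset.sum_nonneg fun w _ => mul_nonneg
      (sub_nonneg.2 (one_le_chainWeight hx 1 w)) (opdam_pos hG hx w).le)
  · rw [euler_Fsym hG hx, Fsym, mul_left_comm]
    refine mul_le_mul_of_nonneg_left ?_ (by positivity)
    have h := hK x hx 1 one_pos
    rw [rayMoment_one, rayMoment_one, mul_left_comm, mul_le_mul_iff_right₀ (Real.exp_pos _)] at h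
    simp only [zero_add, chainWeight_zero, one_mul] at h
    have hnn : 0 ≤ ∑ w : weylGroup D, G (w.1 x) :=
      Finset.sum_nonneg fun w _ => (opdam_pos hG hx w).le
    simp only [sub_mul, one_mul, Finset.sum_sub_distrib]
    linarith

/-- there is `K > 0` with
`0 ≤ (ρ,x) + (x, ∇F₀(x))/F₀(x) ≤ K` for all `x ∈ ā₊`
(this quantity is the Euler operator applied to `log (e^{(ρ,·)} F₀)`). -/
theorem statement8 (D : HOData E) [Fintype (weylGroup D)] (Gzero : E → ℝ)
    (hG0 : IsOpdamR D 0 Gzero) :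
    ∃ K : ℝ, 0 < K ∧ ∀ x ∈ closure (posChamber D),
      0 ≤ ⟪rhoHO D, x⟫ + ⟪x, gradient (Fsym D Gzero) x⟫ / Fsym D Gzero x ∧
      ⟪rhoHO D, x⟫ + ⟪x, gradient (Fsym D Gzero) x⟫ / Fsym D Gzero x ≤ K := by
  obtain ⟨K, hK0, hK⟩ := exists_euler_Fsym_bounds D hG0
  refine ⟨K, hK0, fun x hx => ?_⟩
  obtain ⟨h1, h2, h3⟩ := hK x hx
  have hF : 0 < Fsym D Gzero x := (Real.exp_pos _).trans_le h1
  have heq : ⟪rhoHO D, x⟫ + ⟪x, gradient (Fsym D Gzero) x⟫ / Fsym D Gzero x =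
      (⟪rhoHO D, x⟫ * Fsym D Gzero x + fderiv ℝ (Fsym D Gzero) x x) / Fsym D Gzero x := by
    rw [real_inner_comm _ x, inner_gradient_left, add_div, mul_div_cancel_right₀ _ hF.ne']
  rw [heq]
  exact ⟨div_nonneg h2 hF.le, (div_le_iff₀ hF).2 h3⟩
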